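/- The free MS-algebra on two generators has exactly 8790 elements; equivalently, the quotient of the set of {∧, ∨, °, 0, 1}-terms in two fixed variables by the equivalence relation 't ~ s iff t and s evaluate to the same element of MS under every assignment of the two variables into MS' has exactly 8790 equivalence classes. -/

import Mathlib

/-! Every prime filter of `MS` is the preimage of `↑d = {d, 1}` under an endomorphism (`shiftA` and
`shiftB` serve `↑a` and `↑b`), so a term function is determined by the set of assignments at
which its value lies in `↑d`. Write `p ⊑ q` if each of `p, p°, p°°` lying in `↑d` forces the same
for `q`. This is a partial order on `MS` and a subalgebra of `MS × MS`, so the set attached to a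
two-variable term is an up-set of `(MS, ⊑) × (MS, ⊑)` (`above_eval_mono`). Conversely, the principal
up-set of a point is cut out by a meet of some of `x, x°, x°°, y, y°, y°°`, so every up-set comes from
a term. The free algebra on two generators is thus in bijection with the up-sets of `(MS, ⊑)²`.

Such an up-set is an order-preserving map from `(MS, ⊑)` to its own lattice of up-sets, which has 10
elements. The poset `(MS, ⊑)` has the covers `a ⊏ c ⊏ b ⊏ d`, `a ⊏ z ⊏ b`, `c ⊏ u ⊏ d`, and once the
values at `c, z, b` are fixed, those at `a` and at `(u, d)` can be chosen independently. This turns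
the count into a small sum. -/

/-- Terms in the language {∧, ∨, °, 0, 1} over a set `V` of variables. -/
inductive MSTerm (V : Type) : Type
  | var : V → MSTerm V
  | meet : MSTerm V → MSTerm V → MSTerm V
  | join : MSTerm V → MSTerm V → MSTerm V
  | star : MSTerm V → MSTerm V
  | zero : MSTerm V
  | one : MSTerm V

/-- An algebra in the language {∧, ∨, °, 0, 1}. -/
structure MSAlg where
  carrier : Type
  meet : carrier → carrier → carrier
  join : carrier → carrier → carrier
  star : carrier → carrier
  zero : carrier
  one : carrier

/-- Evaluation of a term in an algebra under an assignment of the variables. -/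
def MSTerm.eval {V : Type} (A : MSAlg) (v : V → A.carrier) : MSTerm V → A.carrier
  | .var x => v x
  | .meet t s => A.meet (t.eval A v) (s.eval A v)
  | .join t s => A.join (t.eval A v) (s.eval A v)
  | .star t => A.star (t.eval A v)
  | .zero => A.zero
  | .one => A.one

/-- Substitution of terms for variables. -/
def MSTerm.subst {V W : Type} (s : V → MSTerm W) : MSTerm V → MSTerm W
  | .var x => s x
  | .meet t u => .meet (t.subst s) (u.subst s)
  | .join t u => .join (t.subst s) (u.subst s)
  | .star t => .star (t.subst s)
  | .zero => .zero
  | .one => .one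

/-- Validity of the identity `φ ≈ ψ` in the algebra `A`. -/
def MSIdValid {V : Type} (A : MSAlg) (φ ψ : MSTerm V) : Prop :=
  ∀ v : V → A.carrier, φ.eval A v = ψ.eval A v

/-- Validity of the quasi-identity `Γ ⇒ φ ≈ ψ` in the algebra `A`. -/
def MSQValid (A : MSAlg) (Γ : List (MSTerm ℕ × MSTerm ℕ)) (φ ψ : MSTerm ℕ) : Prop :=
  ∀ v : ℕ → A.carrier,
    (∀ p ∈ Γ, p.1.eval A v = p.2.eval A v) → φ.eval A v = ψ.eval A v

/-- Admissibility of the quasi-identity `Γ ⇒ φ ≈ ψ` in the algebra `M`. -/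
def MSAdmissible (M : MSAlg) (Γ : List (MSTerm ℕ × MSTerm ℕ)) (φ ψ : MSTerm ℕ) : Prop :=
  ∀ s : ℕ → MSTerm ℕ,
    (∀ p ∈ Γ, MSIdValid M (p.1.subst s) (p.2.subst s)) →
    MSIdValid M (φ.subst s) (ψ.subst s)

/-- `A` is an MS-algebra: a bounded distributive lattice with a unary `°`
satisfying x ≤ x°°, (x ∧ y)° = x° ∨ y°, and 1° = 0. -/
def IsMSAlg (A : MSAlg) : Prop :=
  (∀ x y, A.meet x y = A.meet y x) ∧
  (∀ x y, A.join x y = A.join y x) ∧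
  (∀ x y z, A.meet (A.meet x y) z = A.meet x (A.meet y z)) ∧
  (∀ x y z, A.join (A.join x y) z = A.join x (A.join y z)) ∧
  (∀ x y, A.meet x (A.join x y) = x) ∧
  (∀ x y, A.join x (A.meet x y) = x) ∧
  (∀ x y z, A.meet x (A.join y z) = A.join (A.meet x y) (A.meet x z)) ∧
  (∀ x, A.join x A.zero = x) ∧
  (∀ x, A.meet x A.one = x) ∧
  (∀ x, A.meet x (A.star (A.star x)) = x) ∧
  (∀ x y, A.star (A.meet x y) = A.join (A.star x) (A.star y)) ∧
  A.star A.one = A.zero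

/-- The Dershowitz–Manna multiset ordering (induced by the usual order on `ℕ`). -/
def MultisetLE (N N' : Multiset ℕ) : Prop :=
  ∀ x : ℕ, N'.count x < N.count x → ∃ y : ℕ, x < y ∧ N.count y < N'.count y

/-- The six-element generating MS-algebra on {0, a, b, c, d, 1}:
0 < a, 0 < b, b < c, b < d, a < c, c < 1, d < 1. -/
inductive MS6 : Type
  | z  -- 0
  | a
  | b
  | c
  | d
  | u  -- 1
deriving DecidableEq

def MS6.meet : MS6 → MS6 → MS6
  | .z, _ => .z
  | _, .z => .z
  | .u, y => y
  | x, .u => x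
  | .a, .a => .a
  | .a, .b => .z
  | .a, .c => .a
  | .a, .d => .z
  | .b, .a => .z
  | .b, .b => .b
  | .b, .c => .b
  | .b, .d => .b
  | .c, .a => .a
  | .c, .b => .b
  | .c, .c => .c
  | .c, .d => .b
  | .d, .a => .z
  | .d, .b => .b
  | .d, .c => .b
  | .d, .d => .d

def MS6.join : MS6 → MS6 → MS6
  | .u, _ => .u
  | _, .u => .u
  | .z, y => y
  | x, .z => x
  | .a, .a => .a
  | .a, .b => .c
  | .a, .c => .c
  | .a, .d => .u
  | .b, .a => .c
  | .b, .b => .b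
  | .b, .c => .c
  | .b, .d => .d
  | .c, .a => .c
  | .c, .b => .c
  | .c, .c => .c
  | .c, .d => .u
  | .d, .a => .u
  | .d, .b => .d
  | .d, .c => .u
  | .d, .d => .d

/-- °0 = 1, °a = a, °b = d, °c = 0, °d = d, °1 = 0. -/
def MS6.star : MS6 → MS6
  | .z => .u
  | .a => .a
  | .b => .d
  | .c => .z
  | .d => .d
  | .u => .z

/-- The six-element MS-algebra generating the variety of MS-algebras. -/
def MS6alg : MSAlg := ⟨MS6, MS6.meet, MS6.join, MS6.star, MS6.z, MS6.u⟩

/-- Two terms in two variables are equivalent iff they evaluate to the same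
element of MS under every assignment of the two variables into MS. -/
def freeMS2Setoid : Setoid (MSTerm (Fin 2)) where
  r t s := ∀ v : Fin 2 → MS6, t.eval MS6alg v = s.eval MS6alg v
  iseqv := ⟨fun _ _ => rfl, fun h v => (h v).symm, fun h1 h2 v => (h1 v).trans (h2 v)⟩

namespace FreeMS2

/-! ### Prime filters and the order `⊑` on `MS` -/

instance : Fintype MS6 := ⟨{.z, .a, .b, .c, .d, .u}, by intro x; cases x <;> decide⟩

/-- Characteristic function of the prime filter `↑d = {d, 1}`. -/
def above : MS6 → Bool
  | .d => true
  | .u => true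
  | _ => false

/-- The order `⊑` on `MS6`: comparison of the membership of `p, p°, p°°` in `↑d`. It is different
from the lattice order; its least element is `a` and its greatest element is `d`. -/
def le (p q : MS6) : Bool :=
  (above p ≤ above q) && (above p.star ≤ above q.star) &&
    (above p.star.star ≤ above q.star.star)

/-- The endomorphism of `MS6` with `↑a` as preimage of `↑d`. -/
def shiftA : MS6 → MS6
  | .z => .z
  | .a => .d
  | .b => .a
  | .c => .u
  | .d => .a
  | .u => .u

/-- The endomorphism of `MS6` with `↑b` as preimage of `↑d`. -/
def shiftB : MS6 → MS6
  | .z => .z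
  | .a => .a
  | .b => .d
  | .c => .u
  | .d => .d
  | .u => .u

lemma eval_hom (g : MS6 → MS6) (hm : ∀ x y, g (x.meet y) = (g x).meet (g y))
    (hj : ∀ x y, g (x.join y) = (g x).join (g y)) (hs : ∀ x, g x.star = (g x).star)
    (h0 : g .z = .z) (h1 : g .u = .u) (t : MSTerm (Fin 2)) (v : Fin 2 → MS6) :
    t.eval MS6alg (fun i => g (v i)) = g (t.eval MS6alg v) := by
  induction t with
  | var i => rfl
  | meet t s iht ihs =>
    exact (congrArg₂ MS6.meet iht ihs).trans (hm (t.eval MS6alg v) (s.eval MS6alg v)).symm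
  | join t s iht ihs =>
    exact (congrArg₂ MS6.join iht ihs).trans (hj (t.eval MS6alg v) (s.eval MS6alg v)).symm
  | star t iht => exact (congrArg MS6.star iht).trans (hs (t.eval MS6alg v)).symm
  | zero => exact h0.symm
  | one => exact h1.symm

lemma eval_shiftA (t : MSTerm (Fin 2)) (v : Fin 2 → MS6) :
    t.eval MS6alg (fun i => shiftA (v i)) = shiftA (t.eval MS6alg v) :=
  eval_hom shiftA (by decide) (by decide) (by decide) rfl rfl t v

lemma eval_shiftB (t : MSTerm (Fin 2)) (v : Fin 2 → MS6) :
    t.eval MS6alg (fun i => shiftB (v i)) = shiftB (t.eval MS6alg v) :=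
  eval_hom shiftB (by decide) (by decide) (by decide) rfl rfl t v

/-- The prime filters `↑a, ↑b, ↑d` separate the elements of `MS6`. -/
lemma eq_of_above : ∀ p q : MS6, above p = above q → above (shiftA p) = above (shiftA q) →
    above (shiftB p) = above (shiftB q) → p = q := by decide

lemma le_meet : ∀ p p' q q', le p p' = true → le q q' = true →
    le (p.meet q) (p'.meet q') = true := by decide

lemma le_join : ∀ p p' q q', le p p' = true → le q q' = true →
    le (p.join q) (p'.join q') = true := by decide

lemma le_star : ∀ p p', le p p' = true → le p.star p'.star = true := by decide

lemma le_above : ∀ p p', le p p' = true → above p = true → above p' = true := by decide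

/-- Term functions preserve `⊑`, as `⊑` is a subalgebra of `MS × MS`. -/
lemma le_eval (t : MSTerm (Fin 2)) (v w : Fin 2 → MS6) (h : ∀ i, le (v i) (w i) = true) :
    le (t.eval MS6alg v) (t.eval MS6alg w) = true := by
  induction t with
  | var i => exact h i
  | meet t s iht ihs => exact le_meet _ _ _ _ iht ihs
  | join t s iht ihs => exact le_join _ _ _ _ iht ihs
  | star t iht => exact le_star _ _ iht
  | zero => rfl
  | one => rfl

/-! ### The free algebra as the lattice of up-sets of `(MS, ⊑)²` -/

/-- Up-sets of `(MS6, ⊑) × (MS6, ⊑)`, as characteristic functions. -/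
def UpSq : Type := {f : MS6 → MS6 → Bool //
  ∀ p p' q q', le p p' = true → le q q' = true → f p q = true → f p' q' = true}

/-- The points of the square at which the value of a term lies in `↑d` form an up-set. -/
lemma above_eval_mono (t : MSTerm (Fin 2)) (p p' q q' : MS6) (hp : le p p' = true)
    (hq : le q q' = true) (h : above (t.eval MS6alg ![p, q]) = true) :
    above (t.eval MS6alg ![p', q']) = true := by
  refine le_above _ _ (le_eval t _ _ ?_) h
  intro i
  fin_cases i
  · exact hp
  · exact hq

/-- The up-set of assignments at which a class of terms has value in `↑d`. -/
def toUpSq : Quotient freeMS2Setoid → UpSq :=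
  Quotient.lift
    (fun t => ⟨fun p q => above (t.eval MS6alg ![p, q]), above_eval_mono t⟩)
    (fun _ _ h => Subtype.ext (funext fun p => funext fun q => congrArg above (h ![p, q])))

/-- The values at shifted assignments recover membership in `↑a` and `↑b`. -/
lemma toUpSq_injective : Function.Injective toUpSq := by
  rintro ⟨t⟩ ⟨s⟩ h
  have key : ∀ v : Fin 2 → MS6, above (t.eval MS6alg v) = above (s.eval MS6alg v) := by
    intro v
    have hv : v = ![v 0, v 1] := by
      ext i
      fin_cases i <;> rfl
    rw [hv]
    exact congrFun (congrFun (congrArg Subtype.val h) (v 0)) (v 1)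
  refine Quotient.sound fun v => eq_of_above _ _ (key v) ?_ ?_
  · rw [← eval_shiftA, ← eval_shiftA]
    exact key _
  · rw [← eval_shiftB, ← eval_shiftB]
    exact key _

/-- A term in the variable `i` whose value lies in `↑d` exactly when `p ⊑ v i`. -/
def lit (i : Fin 2) : MS6 → MSTerm (Fin 2)
  | .a => .one
  | .c => .star (.star (.var i))
  | .z => .star (.var i)
  | .b => .meet (.star (.var i)) (.star (.star (.var i)))
  | .u => .var i
  | .d => .meet (.var i) (.star (.var i))

lemma above_lit (i : Fin 2) (p : MS6) (v : Fin 2 → MS6) :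
    above ((lit i p).eval MS6alg v) = le p (v i) := by
  have h : ∀ p x : MS6, above ((lit 0 p).eval MS6alg fun _ => x) = le p x := by decide
  have h' : (lit i p).eval MS6alg v = (lit 0 p).eval MS6alg fun _ => v i := by
    cases p <;> rfl
  rw [h', h]

lemma above_meet : ∀ p q : MS6, above (p.meet q) = (above p && above q) := by decide

lemma above_join : ∀ p q : MS6, above (p.join q) = (above p || above q) := by decide

lemma le_refl : ∀ p : MS6, le p p = true := by decide

/-- A join of terms, one for the principal up-set of each point of a list. -/
def joinTerm (l : List (MS6 × MS6)) : MSTerm (Fin 2) :=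
  l.foldr (fun r t => .join (.meet (lit 0 r.1) (lit 1 r.2)) t) .zero

lemma above_joinTerm (l : List (MS6 × MS6)) (p q : MS6) :
    above ((joinTerm l).eval MS6alg ![p, q]) = true ↔
      ∃ r ∈ l, le r.1 p = true ∧ le r.2 q = true := by
  induction l with
  | nil =>
    simp only [List.not_mem_nil, false_and, exists_false, iff_false]
    exact Bool.false_ne_true
  | cons r l ih =>
    have e : above ((joinTerm (r :: l)).eval MS6alg ![p, q]) =
        ((le r.1 p && le r.2 q) || above ((joinTerm l).eval MS6alg ![p, q])) := by
      refine (above_join _ _).trans (congrArg (· || _) ?_)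
      refine (above_meet _ _).trans ?_
      exact congrArg₂ _ (above_lit 0 r.1 _) (above_lit 1 r.2 _)
    rw [e, Bool.or_eq_true, ih, Bool.and_eq_true]
    simp only [List.mem_cons, exists_eq_or_imp]

/-- An up-set is the union of the principal up-sets of its points. -/
lemma toUpSq_surjective : Function.Surjective toUpSq := by
  rintro ⟨f, hf⟩
  let l := (Finset.univ.filter fun r : MS6 × MS6 => f r.1 r.2 = true).toList
  refine ⟨Quotient.mk _ (joinTerm l), Subtype.ext (funext fun p => funext fun q => ?_)⟩
  have h := above_joinTerm l p q
  refine Bool.eq_iff_iff.mpr (h.trans ⟨?_, fun hpq => ⟨(p, q), ?_, le_refl p, le_refl q⟩⟩)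
  · rintro ⟨r, hr, h1, h2⟩
    exact hf _ _ _ _ h1 h2 (by simpa [l] using hr)
  · simpa [l] using hpq

/-! ### Counting the up-sets of `(MS, ⊑)²` -/

/-- The ten up-sets of `(MS6, ⊑)`, as characteristic functions. -/
def row (i : Fin 10) (q : MS6) : Bool :=
  match i, q with
  | 0, _ => false
  | 1, _ => true
  | _, .d => true
  | _, .a => false
  | 3, .u => true
  | 4, .b => true
  | 5, .u => true
  | 5, .b => true
  | 6, .z => true
  | 6, .b => true
  | 7, .z => true
  | 7, .b => true
  | 7, .u => true
  | 8, .c => true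
  | 8, .b => true
  | 8, .u => true
  | 9, _ => true
  | _, _ => false

lemma row_mono : ∀ i q q', le q q' = true → row i q = true → row i q' = true := by decide

lemma row_injective : ∀ i j, (∀ q, row i q = row j q) → i = j := by decide

lemma exists_row (g : MS6 → Bool) (hg : ∀ q q', le q q' = true → g q = true → g q' = true) :
    ∃ i, row i = g := by
  have key : ∀ g : MS6 → Bool, (∀ q q', le q q' = true → g q = true → g q' = true) →
      ∃ i, ∀ q, row i q = g q := by decide +kernel
  obtain ⟨i, hi⟩ := key g hg
  exact ⟨i, funext hi⟩

/-- Inclusion of up-sets of `(MS6, ⊑)`, in terms of their indices. -/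
def sub (i j : Fin 10) : Bool := decide (∀ q, row i q = true → row j q = true)

lemma sub_trans {i j k : Fin 10} (h : sub i j = true) (h' : sub j k = true) :
    sub i k = true := by
  simp only [sub, decide_eq_true_eq] at *
  exact fun q hq => h' q (h q hq)

lemma sub_refl (i : Fin 10) : sub i i = true := by simp [sub]

/-- Order-preserving maps from `(MS6, ⊑)` to its lattice of up-sets, listed by their values at
`c`, `z`, `b`, then at `a`, and then at `u` and `d`. -/
abbrev Maps : Type :=
  Σ c : Fin 10, Σ z : Fin 10, Σ b : {b : Fin 10 // sub c b && sub z b},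
    {a : Fin 10 // sub a c && sub a z} ×
      Σ u : {u : Fin 10 // sub c u}, {d : Fin 10 // sub b.1 d && sub u.1 d}

/-- The values of an element of `Maps`, as indices of up-sets. -/
def Maps.val : Maps → MS6 → Fin 10
  | ⟨_, z, _, _, _, _⟩, .z => z
  | ⟨_, _, _, a, _, _⟩, .a => a.1
  | ⟨_, _, b, _, _, _⟩, .b => b.1
  | ⟨c, _, _, _, _, _⟩, .c => c
  | ⟨_, _, _, _, _, d⟩, .d => d.1
  | ⟨_, _, _, _, u, _⟩, .u => u.1

lemma Maps.val_mono (m : Maps) (p p' : MS6) (h : le p p' = true) :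
    sub (m.val p) (m.val p') = true := by
  obtain ⟨c, z, ⟨b, hb⟩, ⟨a, ha⟩, ⟨u, hu⟩, ⟨d, hd⟩⟩ := m
  simp only [Bool.and_eq_true] at hb ha hd
  obtain ⟨hcb, hzb⟩ := hb
  obtain ⟨hac, haz⟩ := ha
  obtain ⟨hbd, hud⟩ := hd
  have hab := sub_trans hac hcb
  cases p <;> cases p' <;> first
    | exact absurd h (by decide)
    | exact sub_refl _
    | assumption
    | exact sub_trans hac hu
    | exact sub_trans hab hbd
    | exact sub_trans hcb hbd
    | exact sub_trans hzb hbd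

/-- The up-set of the square corresponding to an order-preserving map. -/
def Maps.toUpSq (m : Maps) : UpSq := ⟨fun p q => row (m.val p) q, by
  intro p p' q q' hp hq h
  have h' := m.val_mono p p' hp
  simp only [sub, decide_eq_true_eq] at h'
  exact h' q' (row_mono _ _ _ hq h)⟩

lemma Maps.toUpSq_bijective : Function.Bijective Maps.toUpSq := by
  constructor
  · intro m n h
    have hv : ∀ p, m.val p = n.val p := fun p =>
      row_injective _ _ fun q => congrFun (congrFun (congrArg Subtype.val h) p) q
    obtain ⟨c, z, ⟨b, hb⟩, ⟨a, ha⟩, ⟨u, hu⟩, ⟨d, hd⟩⟩ := m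
    obtain ⟨c', z', ⟨b', hb'⟩, ⟨a', ha'⟩, ⟨u', hu'⟩, ⟨d', hd'⟩⟩ := n
    obtain rfl : c = c' := hv .c
    obtain rfl : z = z' := hv .z
    obtain rfl : b = b' := hv .b
    obtain rfl : a = a' := hv .a
    obtain rfl : u = u' := hv .u
    obtain rfl : d = d' := hv .d
    rfl
  · rintro ⟨f, hf⟩
    choose F hF using fun p => exists_row (f p) fun q q' hq => hf p p q q' (le_refl p) hq
    have hs : ∀ p p', le p p' = true → sub (F p) (F p') = true := by
      intro p p' h
      simp only [sub, decide_eq_true_eq, hF]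
      exact fun q => hf p p' q q h (le_refl q)
    refine ⟨⟨F .c, F .z, ⟨F .b, ?_⟩, ⟨F .a, ?_⟩, ⟨F .u, hs _ _ rfl⟩, ⟨F .d, ?_⟩⟩,
      Subtype.ext (funext fun p => ?_)⟩
    · rw [hs .c .b rfl, hs .z .b rfl]; rfl
    · rw [hs .a .c rfl, hs .a .z rfl]; rfl
    · rw [hs .b .d rfl, hs .u .d rfl]; rfl
    · cases p <;> exact hF _

lemma card_maps : Fintype.card Maps = 8790 := by
  simp only [Maps, Fintype.card_sigma, Fintype.card_prod]
  decide +kernel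

end FreeMS2

/-- The free MS-algebra on two generators has exactly 8790 elements. -/
theorem statement9 : Nat.card (Quotient freeMS2Setoid) = 8790 := by
  rw [Nat.card_eq_of_bijective _ ⟨FreeMS2.toUpSq_injective, FreeMS2.toUpSq_surjective⟩,
    ← Nat.card_eq_of_bijective _ FreeMS2.Maps.toUpSq_bijective, Nat.card_eq_fintype_card,
    FreeMS2.card_maps]
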